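/- arXiv:1806.00382 — 2 statements merged into one kernel-verified Lean document; each statement's English description precedes it below -/
import Mathlib

section
/- Let 1 ≤ p < ∞ and w ∈ 𝒲. The formal identity j_g : ℓ_p → g(w,p) is finitely strictly singular. Concretely: for every ε > 0 there exists N ∈ ℕ such that every N-dimensional linear subspace F of ℓ_p (real scalars) contains a vector x with ‖x‖_{ℓ_p} = 1 and ‖x‖_{g(w,p)} ≤ ε. -/
/-!
A vector in the unit ball of `ℓ_p` whose coordinates are uniformly small has small Garling norm:
the first `K` terms of `∑ |x_{n_k}|^p w_k` are small because the coordinates are, and the remaining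
ones because `w_k` is small for `k ≥ K`. It therefore suffices that subspaces of `ℓ_p` of large
dimension contain unit vectors with uniformly small coordinates.

This follows from Milman's extreme point argument. Let `F` be an `N`-dimensional subspace of `ℓ_∞`
and let `x` be an extreme point of its unit ball. If fewer than `N` coordinates of `x` had modulus
at least `r`, where `r < 1`, then some nonzero `z ∈ F` would vanish at all of them, and after
scaling `z` both `x + z` and `x - z` would lie in the unit ball. For `F ⊆ ℓ_p` such an `x` satisfies
`‖x‖_p ^ p ≥ N r ^ p`, so normalizing it in `ℓ_p` makes every coordinate small.
-/

/-- The Garling norm `‖x‖_{g(w,p)} = sup (∑_k |x_{n_k}|^p w_k)^{1/p}` of a real sequence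
`x`, the supremum taken over all strictly increasing sequences `n_1 < n_2 < ⋯` of indices
(strictly monotone maps `f : ℕ → ℕ`; everything `0`-indexed). -/
noncomputable def garlingNorm (w : ℕ → ℝ) (p : ℝ) (x : ℕ → ℝ) : ℝ :=
  ⨆ f : {f : ℕ → ℕ // StrictMono f}, (∑' k : ℕ, |x (f.1 k)| ^ p * w k) ^ (1 / p)

open Filter Module Topology
open scoped ENNReal

section ExtremePoints

lemma eq_zero_of_mem_extremePoints {𝕜 E : Type*} [Field 𝕜] [LinearOrder 𝕜]
    [IsStrictOrderedRing 𝕜] [AddCommGroup E] [Module 𝕜 E] {s : Set E} {x z : E}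
    (hx : x ∈ s.extremePoints 𝕜) (hadd : x + z ∈ s) (hsub : x - z ∈ s) : z = 0 := by
  have hseg : x ∈ openSegment 𝕜 (x + z) (x - z) :=
    ⟨1 / 2, 1 / 2, by norm_num, by norm_num, by norm_num, by module⟩
  exact add_eq_left.mp (hx.2 hadd hsub hseg)

lemma extremePoints_closedBall_nonempty {E : Type*} [NormedAddCommGroup E] [NormedSpace ℝ E]
    [FiniteDimensional ℝ E] (c : E) {r : ℝ} (hr : 0 ≤ r) :
    ((Metric.closedBall c r).extremePoints ℝ).Nonempty :=
  have : ProperSpace E := FiniteDimensional.proper ℝ E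
  (isCompact_closedBall c r).extremePoints_nonempty (Metric.nonempty_closedBall.mpr hr)

end ExtremePoints

lemma exists_ne_zero_forall_apply_eq_zero {K V ι : Type*} [Field K] [AddCommGroup V] [Module K V]
    [FiniteDimensional K V] (φ : ι → V →ₗ[K] K) {s : Finset ι} (hs : s.card < finrank K V) :
    ∃ y : V, y ≠ 0 ∧ ∀ i ∈ s, φ i y = 0 := by
  let T : V →ₗ[K] (s → K) := LinearMap.pi fun i => φ i
  have hker : LinearMap.ker T ≠ ⊥ := LinearMap.ker_ne_bot_of_finrank_lt (by simpa using hs)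
  obtain ⟨y, hyT, hy0⟩ := Submodule.exists_mem_ne_zero_of_ne_bot hker
  exact ⟨y, hy0, fun i hi => congrFun (LinearMap.mem_ker.mp hyT) ⟨i, hi⟩⟩

section FlatVectors

variable {ι : Type*}

lemma exists_norm_le_one_finrank_le_encard {r : ℝ} (hr : r < 1)
    (F : Submodule ℝ (lp (fun _ : ι => ℝ) ∞)) [FiniteDimensional ℝ F] :
    ∃ x ∈ F, ‖x‖ ≤ 1 ∧ (finrank ℝ F : ℕ∞) ≤ {i | r ≤ |x i|}.encard := by
  obtain ⟨x, hx⟩ := extremePoints_closedBall_nonempty (0 : F) zero_le_one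
  have hx1 : ‖x‖ ≤ 1 := mem_closedBall_zero_iff.mp hx.1
  refine ⟨x, x.2, hx1, ?_⟩
  by_contra! hcard
  have hfin : {i | r ≤ |x.1 i|}.Finite := Set.finite_of_encard_le_coe hcard.le
  rw [hfin.encard_eq_coe_toFinset_card, Nat.cast_lt] at hcard
  obtain ⟨y, hy0, hy⟩ := exists_ne_zero_forall_apply_eq_zero
    (fun i => (lp.evalₗ (𝕜 := ℝ) (fun _ : ι => ℝ) ∞ i).comp F.subtype) hcard
  let z : F := ((1 - r) * ‖y‖⁻¹) • y
  have hz1 : ‖z‖ = 1 - r := norm_smul_inv_norm' (𝕜 := ℝ) (sub_pos.mpr hr).le hy0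
  have hz0 : z ≠ 0 := norm_pos_iff.mp (hz1.symm ▸ sub_pos.mpr hr)
  have hz : ∀ i, r ≤ |x.1 i| → z.1 i = 0 := fun i hi => by
    have hyi : y.1 i = 0 := hy i (hfin.mem_toFinset.mpr hi)
    simp [z, hyi]
  have hxz : ∀ i, |x.1 i| + |z.1 i| ≤ 1 := fun i => by
    by_cases hi : r ≤ |x.1 i|
    · simpa [hz i hi] using (lp.norm_apply_le_norm ENNReal.top_ne_zero x.1 i).trans hx1
    · have hzi : |z.1 i| ≤ 1 - r := (lp.norm_apply_le_norm ENNReal.top_ne_zero z.1 i).trans_eq hz1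
      linarith
  exact hz0 <| eq_zero_of_mem_extremePoints hx
    (mem_closedBall_zero_iff.mpr <| lp.norm_le_of_forall_le zero_le_one fun i =>
      (abs_add_le _ _).trans (hxz i))
    (mem_closedBall_zero_iff.mpr <| lp.norm_le_of_forall_le zero_le_one fun i =>
      (abs_sub _ _).trans (hxz i))

variable {p : ℝ≥0∞}

lemma card_mul_rpow_le_norm_rpow {E : ι → Type*} [∀ i, NormedAddCommGroup (E i)]
    (hp : 0 < p.toReal) (x : lp E p) {r : ℝ} (hr : 0 ≤ r) {s : Finset ι}
    (hs : ∀ i ∈ s, r ≤ ‖x i‖) : s.card * r ^ p.toReal ≤ ‖x‖ ^ p.toReal :=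
  calc s.card * r ^ p.toReal = s.card • r ^ p.toReal := (nsmul_eq_mul _ _).symm
    _ ≤ ∑ i ∈ s, ‖x i‖ ^ p.toReal :=
      s.card_nsmul_le_sum _ _ fun i hi => Real.rpow_le_rpow hr (hs i hi) hp.le
    _ ≤ ‖x‖ ^ p.toReal := lp.sum_rpow_le_norm_rpow hp x s

variable [Fact (1 ≤ p)]

lemma exists_abs_apply_le_one_finrank_le_norm_rpow (hp : p ≠ ∞) {c : ℝ} (hc : 1 < c)
    (F : Submodule ℝ (lp (fun _ : ι => ℝ) p)) [FiniteDimensional ℝ F] :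
    ∃ x ∈ F, (∀ i, |x i| ≤ 1) ∧ finrank ℝ F ≤ c * ‖x‖ ^ p.toReal := by
  have hp0 : 0 < p.toReal := ENNReal.toReal_pos (zero_lt_one.trans_le Fact.out).ne' hp
  have hc0 : 0 < c := zero_lt_one.trans hc
  let J := lp.linearMapOfLE ℝ (fun _ : ι => ℝ) (le_top : p ≤ ∞)
  have hJ : Function.Injective J := fun x y h => lp.ext (congrArg (fun z : lp _ ∞ => ⇑z) h)
  obtain ⟨_, ⟨x, hxF, rfl⟩, hx1, hcard⟩ := exists_norm_le_one_finrank_le_encard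
    (Real.rpow_lt_one_of_one_lt_of_neg hc (neg_lt_zero.mpr (inv_pos.mpr hp0))) (F.map J)
  refine ⟨x, hxF, fun i => (lp.norm_apply_le_norm ENNReal.top_ne_zero (J x) i).trans hx1, ?_⟩
  obtain ⟨t, ht, htcard⟩ := Set.exists_subset_encard_eq hcard
  lift t to Finset ι using Set.finite_of_encard_eq_coe htcard
  rw [Set.encard_coe_eq_coe_finsetCard, Nat.cast_inj,
    ← (F.equivMapOfInjective J hJ).finrank_eq] at htcard
  have hpow : (c ^ (-p.toReal⁻¹)) ^ p.toReal = c⁻¹ := by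
    rw [Real.rpow_neg hc0.le, Real.inv_rpow (by positivity), Real.rpow_inv_rpow hc0.le hp0.ne']
  have hnorm := card_mul_rpow_le_norm_rpow hp0 x (by positivity) ht
  rwa [hpow, htcard, mul_inv_le_iff₀ hc0, mul_comm] at hnorm

lemma exists_norm_eq_one_abs_apply_rpow_le (hp : p ≠ ∞) {c : ℝ} (hc : 1 < c)
    (F : Submodule ℝ (lp (fun _ : ι => ℝ) p)) (hF : 0 < finrank ℝ F) :
    ∃ x ∈ F, ‖x‖ = 1 ∧ ∀ i, |x i| ^ p.toReal ≤ c / finrank ℝ F := by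
  have hp0 : 0 < p.toReal := ENNReal.toReal_pos (zero_lt_one.trans_le Fact.out).ne' hp
  have : FiniteDimensional ℝ F := .of_finrank_pos hF
  obtain ⟨x, hxF, hx1, hnorm⟩ := exists_abs_apply_le_one_finrank_le_norm_rpow hp hc F
  have hx0 : x ≠ 0 := by
    rintro rfl
    rw [norm_zero, Real.zero_rpow hp0.ne', mul_zero] at hnorm
    exact hF.ne' (by exact_mod_cast hnorm.antisymm (Nat.cast_nonneg _))
  refine ⟨‖x‖⁻¹ • x, F.smul_mem _ hxF, norm_smul_inv_norm (𝕜 := ℝ) hx0, fun i => ?_⟩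
  have hpos : 0 < ‖x‖ ^ p.toReal := Real.rpow_pos_of_pos (norm_pos_iff.mpr hx0) _
  calc |(‖x‖⁻¹ • x) i| ^ p.toReal
      = (‖x‖ ^ p.toReal)⁻¹ * |x i| ^ p.toReal := by
        rw [lp.coeFn_smul, Pi.smul_apply, smul_eq_mul, abs_mul, abs_inv, abs_norm,
          Real.mul_rpow (by positivity) (abs_nonneg _), Real.inv_rpow (norm_nonneg _)]
    _ ≤ (‖x‖ ^ p.toReal)⁻¹ :=
        mul_le_of_le_one_right (by positivity) (Real.rpow_le_one (abs_nonneg _) (hx1 i) hp0.le)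
    _ ≤ c / finrank ℝ F := by
        rwa [inv_le_iff_one_le_mul₀ hpos, div_mul_eq_mul_div, one_le_div (Nat.cast_pos.mpr hF)]

end FlatVectors

section Garling

lemma tsum_mul_le_of_le_of_tail_le {a w : ℕ → ℝ} (ha : ∀ k, 0 ≤ a k) (hsum : Summable a)
    (hw : ∀ k, 0 ≤ w k) {δ η : ℝ} {K : ℕ} (hδ : ∀ k, a k ≤ δ) (hη : ∀ k, K ≤ k → w k ≤ η) :
    ∑' k, a k * w k ≤ δ * ∑ k ∈ Finset.range K, w k + η * ∑' k, a k := by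
  have hη0 : 0 ≤ η := (hw K).trans (hη K le_rfl)
  have htail : ∀ k, a (k + K) * w (k + K) ≤ η * a (k + K) := fun k => by
    rw [mul_comm η]
    exact mul_le_mul_of_nonneg_left (hη _ (Nat.le_add_left K k)) (ha _)
  have hsum_tail : Summable fun k => η * a (k + K) := ((summable_nat_add_iff K).mpr hsum).mul_left η
  have hsum_mul_tail : Summable fun k => a (k + K) * w (k + K) :=
    .of_nonneg_of_le (fun k => mul_nonneg (ha _) (hw _)) htail hsum_tail
  calc ∑' k, a k * w k
      = ∑ k ∈ Finset.range K, a k * w k + ∑' k, a (k + K) * w (k + K) :=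
        (((summable_nat_add_iff K).mp hsum_mul_tail).sum_add_tsum_nat_add K).symm
    _ ≤ ∑ k ∈ Finset.range K, δ * w k + ∑' k, η * a (k + K) :=
        add_le_add (Finset.sum_le_sum fun k _ => mul_le_mul_of_nonneg_right (hδ k) (hw k))
          (hsum_mul_tail.tsum_le_tsum htail hsum_tail)
    _ ≤ δ * ∑ k ∈ Finset.range K, w k + η * ∑' k, a k := by
        rw [← Finset.mul_sum, tsum_mul_left]
        gcongr _ + η * ?_
        exact tsum_comp_le_tsum_of_inj hsum ha (add_left_injective K)

lemma garlingNorm_le_of_abs_rpow_le_of_tail_le {w x : ℕ → ℝ} {p : ℝ} (hp : 0 ≤ p)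
    (hw : ∀ k, 0 ≤ w k) (hsum : Summable fun i => |x i| ^ p) {δ η : ℝ} {K : ℕ}
    (hδ : ∀ i, |x i| ^ p ≤ δ) (hη : ∀ k, K ≤ k → w k ≤ η) :
    garlingNorm w p x ≤
      (δ * ∑ k ∈ Finset.range K, w k + η * ∑' i, |x i| ^ p) ^ (1 / p) := by
  have : Nonempty {f : ℕ → ℕ // StrictMono f} := ⟨⟨id, strictMono_id⟩⟩
  have hη0 : 0 ≤ η := (hw K).trans (hη K le_rfl)
  have hx0 : ∀ i, 0 ≤ |x i| ^ p := fun i => by positivity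
  refine ciSup_le fun ⟨f, hf⟩ => ?_
  refine Real.rpow_le_rpow (tsum_nonneg fun k => mul_nonneg (hx0 _) (hw k)) ?_ (by positivity)
  calc ∑' k, |x (f k)| ^ p * w k
      ≤ δ * ∑ k ∈ Finset.range K, w k + η * ∑' k, |x (f k)| ^ p :=
        tsum_mul_le_of_le_of_tail_le (fun k => hx0 (f k)) (hsum.comp_injective hf.injective) hw
          (fun k => hδ (f k)) hη
    _ ≤ δ * ∑ k ∈ Finset.range K, w k + η * ∑' i, |x i| ^ p := by
        gcongr _ + η * ?_
        exact tsum_comp_le_tsum_of_inj hsum hx0 hf.injective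

lemma exists_pos_forall_garlingNorm_le {w : ℕ → ℝ} {p : ℝ} (hp : 0 < p) (hw : ∀ k, 0 ≤ w k)
    (hw_null : Tendsto w atTop (𝓝 0)) {ε : ℝ} (hε : 0 < ε) :
    ∃ δ > 0, ∀ x : ℕ → ℝ, Summable (fun i => |x i| ^ p) → ∑' i, |x i| ^ p ≤ 1 →
      (∀ i, |x i| ^ p ≤ δ) → garlingNorm w p x ≤ ε := by
  have hεp : 0 < ε ^ p / 2 := half_pos (Real.rpow_pos_of_pos hε p)
  obtain ⟨K, hK⟩ := eventually_atTop.mp (hw_null.eventually_le_const hεp)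
  obtain ⟨δ, hδ, hδK⟩ := exists_pos_mul_lt hεp (∑ k ∈ Finset.range K, w k)
  refine ⟨δ, hδ, fun x hsum hx1 hxδ => ?_⟩
  have hbound : δ * ∑ k ∈ Finset.range K, w k + ε ^ p / 2 * ∑' i, |x i| ^ p ≤ ε ^ p := by
    have htail := mul_le_of_le_one_right hεp.le hx1
    linarith
  calc garlingNorm w p x
      ≤ (δ * ∑ k ∈ Finset.range K, w k + ε ^ p / 2 * ∑' i, |x i| ^ p) ^ (1 / p) :=
        garlingNorm_le_of_abs_rpow_le_of_tail_le hp.le hw hsum hxδ hK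
    _ ≤ (ε ^ p) ^ (1 / p) := by
        have hw_sum := Finset.sum_nonneg fun k (_ : k ∈ Finset.range K) => hw k
        gcongr
    _ = ε := by rw [one_div, Real.rpow_rpow_inv hε.le hp.ne']

end Garling

theorem stmt_4_general (p : ℝ≥0∞) [Fact (1 ≤ p)] (hp : p ≠ ∞) (w : ℕ → ℝ)
    (hw_nonneg : ∀ i, 0 ≤ w i) (hw_null : Tendsto w atTop (𝓝 0)) :
    ∀ ε : ℝ, 0 < ε → ∃ N : ℕ,
      ∀ F : Subspace ℝ (lp (fun _ : ℕ => ℝ) p), finrank ℝ F = N →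
        ∃ x ∈ F, ‖x‖ = 1 ∧ garlingNorm w p.toReal (fun i => x i) ≤ ε := by
  intro ε hε
  have hp0 : 0 < p.toReal := ENNReal.toReal_pos (zero_lt_one.trans_le Fact.out).ne' hp
  obtain ⟨δ, hδ, hgarling⟩ := exists_pos_forall_garlingNorm_le hp0 hw_nonneg hw_null hε
  obtain ⟨N, hN⟩ := exists_nat_gt (2 / δ)
  have hN0 : (0 : ℝ) < N := (div_pos two_pos hδ).trans hN
  refine ⟨N, fun F hF => ?_⟩
  obtain ⟨x, hxF, hx1, hflat⟩ :=
    exists_norm_eq_one_abs_apply_rpow_le hp one_lt_two F (hF ▸ Nat.cast_pos.mp hN0)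
  have hsum : ∑' i, |x i| ^ p.toReal = 1 := by
    simpa only [hx1, Real.one_rpow, Real.norm_eq_abs] using (lp.norm_rpow_eq_tsum hp0 x).symm
  refine ⟨x, hxF, hx1, hgarling _ ((lp.memℓp x).summable hp0) hsum.le fun i => (hflat i).trans ?_⟩
  rw [hF]
  exact (div_lt_comm₀ hδ hN0).mp hN |>.le

/-- Let `1 ≤ p < ∞` and `w ∈ 𝒲` (a positive, nonincreasing null weight with
`w_1 = 1`, not summable; `0`-indexed below).  The formal identity `j_g : ℓ_p → g(w,p)` is
finitely strictly singular: for every `ε > 0` there exists `N ∈ ℕ` such that every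
`N`-dimensional linear subspace `F` of the real space `ℓ_p` contains a vector `x` with
`‖x‖_{ℓ_p} = 1` and `‖x‖_{g(w,p)} ≤ ε`. -/
theorem stmt_4 (p : ℝ) (hp : 1 ≤ p) [Fact (1 ≤ ENNReal.ofReal p)]
    (w : ℕ → ℝ) (hw_pos : ∀ i, 0 < w i) (hw_one : w 0 = 1) (hw_anti : Antitone w)
    (hw_null : Filter.Tendsto w Filter.atTop (nhds 0)) (hw_nonsum : ¬ Summable w) :
    ∀ ε : ℝ, 0 < ε → ∃ N : ℕ,
      ∀ F : Subspace ℝ (lp (fun _ : ℕ => ℝ) (ENNReal.ofReal p)),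
        Module.finrank ℝ F = N →
        ∃ x ∈ F, ‖x‖ = 1 ∧ garlingNorm w p (fun i => x i) ≤ ε := by
  simpa only [ENNReal.toReal_ofReal (zero_le_one.trans hp)] using
    stmt_4_general (ENNReal.ofReal p) ENNReal.ofReal_ne_top w (fun i => (hw_pos i).le) hw_null
end

section
/- Let 1 ≤ p < ∞ and w ∈ 𝒲. Let (E_n)_{n=1}^∞ be any sequence of finite-dimensional real normed spaces and let E = (⊕_{n=1}^∞ E_n)_{ℓ_p}. Then there do not exist a constant C ≥ 1 and a sequence (z_i)_{i=1}^∞ in E such that for every finitely supported real sequence (a_i): C^{-1}·‖a‖_{d(w,p)} ≤ ‖∑_{i=1}^∞ a_i z_i‖_E ≤ C·‖a‖_{d(w,p)}. In particular, the Lorentz sequence space d(w,p) does not embed isomorphically into any ℓ_p-sum of finite-dimensional spaces. -/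
/-!
Suppose `(z_i)` in an `ℓ_p`-sum of finite-dimensional spaces is equivalent to the unit vector basis
of `d(w,p)`. It is bounded and separated, say `‖z_i - z_j‖ ≥ δ`. By compactness a subsequence
converges in every coordinate, so the differences of its consecutive pairs tend to `0` in every
coordinate while keeping norm at least `δ`. Such vectors are asymptotically disjoint from any given
vector, so a gliding hump finds sets `A`, `B` of `N` indices with
`‖∑_A z_i - ∑_B z_i‖ ^ p ≥ N c` for any fixed `c < δ ^ p`. But the left side is at most `(2 C) ^ p`
times the largest sum of `N` weights, which is `o(N)` because `w → 0`.
-/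

/-- The Lorentz norm `‖a‖_{d(w,p)} = sup_σ (∑_n |a_{σ(n)}|^p w_n)^{1/p}` of a (finitely
supported) real sequence `a`, the supremum taken over all permutations `σ` of `ℕ`
(everything `0`-indexed). -/
noncomputable def lorentzNorm (w : ℕ → ℝ) (p : ℝ) (a : ℕ → ℝ) : ℝ :=
  ⨆ σ : Equiv.Perm ℕ, (∑' n : ℕ, |a (σ n)| ^ p * w n) ^ (1 / p)

open Filter Topology
open scoped Finset

/-! ### Averages of null families -/

lemma eventually_forall_sum_le_mul_card {α : Type*} {w : α → ℝ} (hw : Tendsto w cofinite (𝓝 0))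
    {ε : ℝ} (hε : 0 < ε) :
    ∀ᶠ N : ℕ in atTop, ∀ s : Finset α, #s = N → ∑ i ∈ s, w i ≤ ε * N := by
  classical
  have hfin : {i | ¬w i < ε / 2}.Finite := hw.eventually (gt_mem_nhds (half_pos hε))
  set F := hfin.toFinset
  filter_upwards [eventually_ge_atTop ⌈2 * (∑ i ∈ F, |w i|) / ε⌉₊] with N hN s hs
  have h_large : ∑ i ∈ s with i ∈ F, w i ≤ ∑ i ∈ F, |w i| :=
    (Finset.sum_le_sum fun i _ => le_abs_self (w i)).trans <|
      Finset.sum_le_sum_of_subset_of_nonneg (fun i hi => (Finset.mem_filter.mp hi).2)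
        fun i _ _ => abs_nonneg (w i)
  have h_small : ∑ i ∈ s with i ∉ F, w i ≤ N * (ε / 2) := calc
    ∑ i ∈ s with i ∉ F, w i ≤ #{i ∈ s | i ∉ F} • (ε / 2) :=
      Finset.sum_le_card_nsmul _ _ _ fun i hi => by
        have : w i < ε / 2 := by simpa [F] using (Finset.mem_filter.mp hi).2
        exact this.le
    _ ≤ N * (ε / 2) := by
      rw [nsmul_eq_mul, ← hs]
      gcongr
      exact Finset.filter_subset _ _
  have hK : 2 * (∑ i ∈ F, |w i|) ≤ N * ε := (div_le_iff₀ hε).mp (Nat.ceil_le.mp hN)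
  rw [← Finset.sum_filter_add_sum_filter_not s (· ∈ F)]
  linarith

/-! ### The Lorentz norm -/

section Lorentz

variable {w : ℕ → ℝ} {p : ℝ}

lemma tsum_abs_rpow_perm_mul_eq_sum (hp : 0 < p) {a : ℕ → ℝ} {s : Finset ℕ} (ha : ∀ i ∉ s, a i = 0)
    (σ : Equiv.Perm ℕ) :
    ∑' n, |a (σ n)| ^ p * w n = ∑ i ∈ s, |a i| ^ p * w (σ.symm i) := by
  rw [← σ.symm.tsum_eq]
  simp only [Equiv.apply_symm_apply]
  refine tsum_eq_sum fun i hi => ?_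
  rw [ha i hi, abs_zero, Real.zero_rpow hp.ne', zero_mul]

lemma bddAbove_range_lorentz (hp : 0 < p) (hw : 0 ≤ w) (hw_bdd : BddAbove (Set.range w))
    {a : ℕ → ℝ} (ha : a.support.Finite) :
    BddAbove (Set.range fun σ : Equiv.Perm ℕ => (∑' n, |a (σ n)| ^ p * w n) ^ (1 / p)) := by
  obtain ⟨W, hW⟩ := hw_bdd
  refine ⟨(∑ i ∈ ha.toFinset, |a i| ^ p * W) ^ (1 / p), ?_⟩
  rintro _ ⟨σ, rfl⟩
  have ha' : ∀ i ∉ ha.toFinset, a i = 0 := fun i hi => by simpa using hi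
  dsimp only
  rw [tsum_abs_rpow_perm_mul_eq_sum hp ha']
  refine Real.rpow_le_rpow ?_ ?_ (by positivity)
  · exact Finset.sum_nonneg fun i _ => mul_nonneg (by positivity) (hw _)
  · gcongr
    exact hW ⟨_, rfl⟩

lemma abs_mul_rpow_le_lorentzNorm (hp : 0 < p) (hw : 0 ≤ w) (hw_bdd : BddAbove (Set.range w))
    {a : ℕ → ℝ} (ha : a.support.Finite) (j m : ℕ) :
    |a j| * w m ^ (1 / p) ≤ lorentzNorm w p a := by
  have ha' : ∀ i ∉ insert j ha.toFinset, a i = 0 := fun i hi => by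
    simpa using (Finset.notMem_mono (Finset.subset_insert _ _) hi)
  refine le_trans ?_ (le_ciSup (bddAbove_range_lorentz hp hw hw_bdd ha) (Equiv.swap m j))
  calc |a j| * w m ^ (1 / p) = (|a j| ^ p * w m) ^ (1 / p) := by
        rw [Real.mul_rpow (by positivity) (hw m), one_div, Real.rpow_rpow_inv (abs_nonneg _) hp.ne']
    _ ≤ (∑' n, |a (Equiv.swap m j n)| ^ p * w n) ^ (1 / p) := by
        rw [tsum_abs_rpow_perm_mul_eq_sum hp ha']
        refine Real.rpow_le_rpow (mul_nonneg (by positivity) (hw m)) ?_ (by positivity)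
        simpa using Finset.single_le_sum
          (f := fun i => |a i| ^ p * w ((Equiv.swap m j).symm i))
          (fun i _ => mul_nonneg (by positivity) (hw _)) (Finset.mem_insert_self j ha.toFinset)

lemma lorentzNorm_indicator_one_le (hp : 0 < p) (hw : 0 ≤ w) {A : Finset ℕ} {b : ℝ}
    (hb : ∀ B : Finset ℕ, #B = #A → ∑ i ∈ B, w i ≤ b) :
    lorentzNorm w p ((A : Set ℕ).indicator 1) ≤ b ^ (1 / p) := by
  refine ciSup_le fun σ => ?_
  have h_zero : ∀ i ∉ A, (A : Set ℕ).indicator (1 : ℕ → ℝ) i = 0 := fun i hi => by simp [hi]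
  have h_sum : ∑' n, |(A : Set ℕ).indicator (1 : ℕ → ℝ) (σ n)| ^ p * w n
      = ∑ i ∈ A.map σ.symm.toEmbedding, w i := by
    rw [tsum_abs_rpow_perm_mul_eq_sum hp h_zero, Finset.sum_map]
    refine Finset.sum_congr rfl fun i hi => ?_
    simp [hi]
  rw [h_sum]
  exact Real.rpow_le_rpow (Finset.sum_nonneg fun i _ => hw i) (hb _ (Finset.card_map _))
    (by positivity)

variable {X : Type*} [NormedAddCommGroup X] [NormedSpace ℝ X] {z : ℕ → X} {C : ℝ}

lemma norm_sum_le_of_le_lorentzNorm (hp : 0 < p) (hw : 0 ≤ w) (hC : 0 ≤ C)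
    (hz : ∀ a : ℕ → ℝ, a.support.Finite → ‖∑' i, a i • z i‖ ≤ C * lorentzNorm w p a)
    {A : Finset ℕ} {b : ℝ} (hb : ∀ B : Finset ℕ, #B = #A → ∑ i ∈ B, w i ≤ b) :
    ‖∑ i ∈ A, z i‖ ≤ C * b ^ (1 / p) := by
  have h_sum : ∑' i, (A : Set ℕ).indicator (1 : ℕ → ℝ) i • z i = ∑ i ∈ A, z i := by
    rw [tsum_eq_sum (s := A) fun i hi => by simp [hi]]
    exact Finset.sum_congr rfl fun i hi => by simp [hi]
  rw [← h_sum]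
  refine (hz _ (A.finite_toSet.subset Set.support_indicator_subset)).trans ?_
  gcongr
  exact lorentzNorm_indicator_one_le hp hw hb

lemma norm_sum_sub_sum_rpow_le_of_le_lorentzNorm (hp : 0 < p) (hw : 0 ≤ w) (hC : 0 ≤ C)
    (hz : ∀ a : ℕ → ℝ, a.support.Finite → ‖∑' i, a i • z i‖ ≤ C * lorentzNorm w p a)
    {A B : Finset ℕ} (hAB : #A = #B) {b : ℝ} (hb : ∀ s : Finset ℕ, #s = #A → ∑ i ∈ s, w i ≤ b) :
    ‖∑ i ∈ A, z i - ∑ i ∈ B, z i‖ ^ p ≤ (2 * C) ^ p * b := by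
  have hb₀ : 0 ≤ b := (Finset.sum_nonneg fun i _ => hw i).trans (hb A rfl)
  have hA := norm_sum_le_of_le_lorentzNorm hp hw hC hz hb
  have hB := norm_sum_le_of_le_lorentzNorm hp hw hC hz (hAB ▸ hb)
  calc ‖∑ i ∈ A, z i - ∑ i ∈ B, z i‖ ^ p
      ≤ (2 * C * b ^ (1 / p)) ^ p :=
        Real.rpow_le_rpow (norm_nonneg _) (by linarith [norm_sub_le (∑ i ∈ A, z i) (∑ i ∈ B, z i)])
          hp.le
    _ = (2 * C) ^ p * b := by
        rw [Real.mul_rpow (by positivity) (by positivity), one_div, Real.rpow_inv_rpow hb₀ hp.ne']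

lemma eventually_norm_sum_sub_sum_rpow_le_of_le_lorentzNorm (hp : 0 < p) (hw : 0 ≤ w)
    (hw_null : Tendsto w atTop (𝓝 0)) (hC : 0 < C)
    (hz : ∀ a : ℕ → ℝ, a.support.Finite → ‖∑' i, a i • z i‖ ≤ C * lorentzNorm w p a)
    {ε : ℝ} (hε : 0 < ε) :
    ∀ᶠ N : ℕ in atTop, ∀ A B : Finset ℕ, #A = N → #B = N →
      ‖∑ i ∈ A, z i - ∑ i ∈ B, z i‖ ^ p ≤ N * ε := by
  have hCp : 0 < (2 * C) ^ p := by positivity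
  filter_upwards [eventually_forall_sum_le_mul_card (Nat.cofinite_eq_atTop ▸ hw_null)
    (div_pos hε hCp)] with N hN A B hA hB
  calc ‖∑ i ∈ A, z i - ∑ i ∈ B, z i‖ ^ p
      ≤ (2 * C) ^ p * (ε / (2 * C) ^ p * N) :=
        norm_sum_sub_sum_rpow_le_of_le_lorentzNorm hp hw hC.le hz (hA.trans hB.symm)
          (by rwa [hA])
    _ = N * ε := by field_simp

lemma exists_forall_norm_le_of_le_lorentzNorm (hp : 0 < p) (hw : 0 ≤ w)
    (hw_bdd : BddAbove (Set.range w)) (hC : 0 ≤ C)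
    (hz : ∀ a : ℕ → ℝ, a.support.Finite → ‖∑' i, a i • z i‖ ≤ C * lorentzNorm w p a) :
    ∃ M, ∀ n, ‖z n‖ ≤ M := by
  obtain ⟨W, hW⟩ := hw_bdd
  have hW_card : ∀ B : Finset ℕ, #B = 1 → ∑ i ∈ B, w i ≤ W := fun B hB => by
    obtain ⟨k, rfl⟩ := Finset.card_eq_one.mp hB
    simpa using hW ⟨k, rfl⟩
  exact ⟨C * W ^ (1 / p), fun n => by
    simpa using norm_sum_le_of_le_lorentzNorm (A := {n}) hp hw hC hz hW_card⟩

lemma mul_rpow_le_norm_sub_of_lorentzNorm_le (hp : 0 < p) (hw : 0 ≤ w)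
    (hw_bdd : BddAbove (Set.range w)) (hC : 0 ≤ C)
    (hz : ∀ a : ℕ → ℝ, a.support.Finite → C * lorentzNorm w p a ≤ ‖∑' i, a i • z i‖)
    (m : ℕ) {i j : ℕ} (hij : i ≠ j) : C * w m ^ (1 / p) ≤ ‖z i - z j‖ := by
  set a : ℕ → ℝ := Pi.single i 1 - Pi.single j 1 with ha
  have h_zero : ∀ k ∉ ({i, j} : Finset ℕ), a k = 0 := fun k hk => by
    simp only [Finset.mem_insert, Finset.mem_singleton, not_or] at hk
    simp [ha, hk.1, hk.2]
  have h_fin : a.support.Finite :=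
    (Finset.finite_toSet {i, j}).subset fun k hk => by_contra fun h => hk (h_zero k h)
  have h_sum : ∑' k, a k • z k = z i - z j := by
    rw [tsum_eq_sum fun k hk => by rw [h_zero k hk, zero_smul], Finset.sum_pair hij]
    simp [ha, hij, hij.symm, sub_eq_add_neg]
  have h_norm : w m ^ (1 / p) ≤ lorentzNorm w p a := by
    simpa [ha, hij] using abs_mul_rpow_le_lorentzNorm hp hw hw_bdd h_fin i m
  rw [← h_sum]
  exact (mul_le_mul_of_nonneg_left h_norm hC).trans (hz a h_fin)

end Lorentz

/-! ### Coordinatewise null sequences in an `ℓ_q`-sum -/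

section LpSum

variable {ι : Type*} {E : ι → Type*} [∀ i, NormedAddCommGroup (E i)] {q : ENNReal}

section Tail

variable [DecidableEq ι]

/-- The tail of an element of an `ℓ_q`-sum off a finite set `s` of coordinates: the element with its
coordinates in `s` replaced by `0`. -/
noncomputable def lpTail (s : Finset ι) (f : lp E q) : lp E q :=
  f - ∑ i ∈ s, lp.single q i (f i)

lemma lpTail_add (s : Finset ι) (f g : lp E q) : lpTail s (f + g) = lpTail s f + lpTail s g := by
  simp only [lpTail, lp.coeFn_add, Pi.add_apply, lp.single_add, Finset.sum_add_distrib]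
  abel

lemma sum_norm_rpow_add_norm_lpTail_rpow (hq : 0 < q.toReal) (s : Finset ι) (f : lp E q) :
    ∑ i ∈ s, ‖f i‖ ^ q.toReal + ‖lpTail s f‖ ^ q.toReal = ‖f‖ ^ q.toReal := by
  rw [lpTail, lp.norm_compl_sum_single hq, add_sub_cancel]

variable [Fact (1 ≤ q)]

lemma norm_sub_norm_sub_norm_le_norm_lpTail_add (s : Finset ι) (x y : lp E q) :
    ‖y‖ - ‖lpTail s x‖ - ‖y - lpTail s y‖ ≤ ‖lpTail s (x + y)‖ := by
  have h_y := norm_le_norm_add_norm_sub' y (lpTail s y)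
  have h_tail : ‖lpTail s y‖ ≤ ‖lpTail s (x + y)‖ + ‖lpTail s x‖ := by
    rw [lpTail_add, add_comm (lpTail s x)]
    exact norm_le_add_norm_add (lpTail s y) (lpTail s x)
  linarith

lemma tendsto_lpTail_atTop (hq : q ≠ ⊤) (f : lp E q) :
    Tendsto (fun s => lpTail s f) atTop (𝓝 0) := by
  have h_sum : Tendsto (fun s => ∑ i ∈ s, lp.single q i (f i)) atTop (𝓝 f) :=
    lp.hasSum_single hq f
  simpa only [lpTail, sub_self] using (tendsto_const_nhds (x := f)).sub h_sum

lemma tendsto_sub_lpTail_of_coord {κ : Type*} {l : Filter κ} {y : κ → lp E q}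
    (hy : ∀ i, Tendsto (fun k => y k i) l (𝓝 0)) (s : Finset ι) :
    Tendsto (fun k => y k - lpTail s (y k)) l (𝓝 0) := by
  have h_single (i : ι) : Tendsto (fun k => lp.single q i (y k i)) l (𝓝 0) := by
    simpa only [lp.single_zero, Function.comp_def] using
      ((lp.isometry_single i).continuous.tendsto 0).comp (hy i)
  simpa only [lpTail, sub_sub_cancel, Finset.sum_const_zero] using
    tendsto_finsetSum s fun i _ => h_single i

end Tail

variable [Fact (1 ≤ q)]

lemma eventually_lt_norm_add_rpow (hq : q ≠ ⊤) {κ : Type*} {l : Filter κ} {y : κ → lp E q}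
    (hy : ∀ i, Tendsto (fun k => y k i) l (𝓝 0)) {δ : ℝ} (hδ : 0 ≤ δ) (hyδ : ∀ k, δ ≤ ‖y k‖)
    (x : lp E q) {c : ℝ} (hc : c < ‖x‖ ^ q.toReal + δ ^ q.toReal) :
    ∀ᶠ k in l, c < ‖x + y k‖ ^ q.toReal := by
  classical
  set p := q.toReal
  have hp : 0 < p := ENNReal.toReal_pos (zero_lt_one.trans_le Fact.out).ne' hq
  have h_rpow : Continuous fun t : ℝ => (max t 0) ^ p :=
    (continuous_id.max continuous_const).rpow_const fun _ => Or.inr hp.le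
  obtain ⟨s, hs⟩ : ∃ s, c < ∑ i ∈ s, ‖x i‖ ^ p + (max (δ - ‖lpTail s x‖) 0) ^ p := by
    have h_tail : Tendsto (fun s => δ - ‖lpTail s x‖) atTop (𝓝 δ) := by
      simpa using tendsto_const_nhds.sub (tendsto_lpTail_atTop hq x).norm
    have h_sum : Tendsto (fun s => ∑ i ∈ s, ‖x i‖ ^ p) atTop (𝓝 (‖x‖ ^ p)) := lp.hasSum_norm hp x
    have h_lim := h_sum.add ((h_rpow.tendsto δ).comp h_tail)
    rw [max_eq_left hδ] at h_lim
    exact (h_lim.eventually (lt_mem_nhds hc)).exists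
  have h_head : Tendsto (fun k => ∑ i ∈ s, ‖x i + y k i‖ ^ p) l (𝓝 (∑ i ∈ s, ‖x i‖ ^ p)) :=
    tendsto_finsetSum s fun i _ => by
      simpa using ((tendsto_const_nhds.add (hy i)).norm).rpow_const (Or.inr hp.le)
  have h_tail : Tendsto (fun k => δ - ‖lpTail s x‖ - ‖y k - lpTail s (y k)‖) l
      (𝓝 (δ - ‖lpTail s x‖)) := by
    simpa using tendsto_const_nhds.sub (tendsto_sub_lpTail_of_coord hy s).norm
  filter_upwards [(h_head.add ((h_rpow.tendsto _).comp h_tail)).eventually (lt_mem_nhds hs)]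
    with k hk
  refine hk.trans_le ?_
  rw [← sum_norm_rpow_add_norm_lpTail_rpow hp s (x + y k)]
  refine add_le_add le_rfl (Real.rpow_le_rpow (le_max_right _ _) ?_ hp.le)
  have h_le := norm_sub_norm_sub_norm_le_norm_lpTail_add s x (y k)
  exact max_le (by linarith [hyδ k]) (norm_nonneg _)

lemma exists_card_eq_mul_le_norm_sum_rpow (hq : q ≠ ⊤) {κ : Type*} {l : Filter κ} [l.NeBot]
    (hl : l ≤ cofinite) {y : κ → lp E q} (hy : ∀ i, Tendsto (fun k => y k i) l (𝓝 0))
    {δ : ℝ} (hδ : 0 ≤ δ) (hyδ : ∀ k, δ ≤ ‖y k‖) {c : ℝ} (hc : c < δ ^ q.toReal) (N : ℕ) :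
    ∃ s : Finset κ, #s = N ∧ N * c ≤ ‖∑ k ∈ s, y k‖ ^ q.toReal := by
  classical
  induction N with
  | zero => exact ⟨∅, rfl, by simpa using Real.rpow_nonneg le_rfl _⟩
  | succ N ih =>
    obtain ⟨s, rfl, hs⟩ := ih
    have h_grow := eventually_lt_norm_add_rpow hq hy hδ hyδ (∑ k ∈ s, y k)
      (add_lt_add_of_le_of_lt hs hc)
    obtain ⟨k, hk, hks⟩ := (h_grow.and (s.eventually_cofinite_notMem.filter_mono hl)).exists
    refine ⟨insert k s, Finset.card_insert_of_notMem hks, ?_⟩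
    rw [Finset.sum_insert hks, add_comm (y k)]
    push_cast
    linarith

lemma countable_setOf_lp_apply_ne_zero (hq : q ≠ ⊤) (f : lp E q) : {i | f i ≠ 0}.Countable := by
  have hp : 0 < q.toReal := ENNReal.toReal_pos (zero_lt_one.trans_le Fact.out).ne' hq
  refine ((lp.memℓp f).summable hp).countable_support.mono fun i hi => ?_
  exact (Real.rpow_pos_of_pos (norm_pos_iff.mpr hi) _).ne'

lemma exists_subseq_coord_tendsto [∀ i, ProperSpace (E i)] (hq : q ≠ ⊤) {z : ℕ → lp E q} {M : ℝ}
    (hM : ∀ n, ‖z n‖ ≤ M) :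
    ∃ φ : ℕ → ℕ, StrictMono φ ∧ ∀ i, ∃ x, Tendsto (fun k => z (φ k) i) atTop (𝓝 x) := by
  -- Restricting to the countably many active coordinates makes the product first countable.
  set S : Set ι := ⋃ n, {i | z n i ≠ 0}
  have : Countable S :=
    (Set.countable_iUnion fun n => countable_setOf_lp_apply_ne_zero hq (z n)).to_subtype
  have h_compact : IsCompact (Set.univ.pi fun i : S => Metric.closedBall (0 : E i) M) :=
    isCompact_univ_pi fun i => isCompact_closedBall 0 M
  obtain ⟨x, -, φ, hφ, hx⟩ := h_compact.tendsto_subseq (x := fun n (i : S) => z n i)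
    fun n i _ => mem_closedBall_zero_iff.mpr <|
      (lp.norm_apply_le_norm (zero_lt_one.trans_le Fact.out).ne' (z n) i).trans (hM n)
  refine ⟨φ, hφ, fun i => ?_⟩
  by_cases hi : i ∈ S
  · exact ⟨x ⟨i, hi⟩, tendsto_pi_nhds.mp hx ⟨i, hi⟩⟩
  · have h_zero : ∀ n, z n i = 0 := by simpa [S] using hi
    exact ⟨0, by simpa only [h_zero] using tendsto_const_nhds⟩

theorem exists_card_eq_mul_le_norm_sum_sub_sum_rpow [∀ i, ProperSpace (E i)] (hq : q ≠ ⊤)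
    {z : ℕ → lp E q} {M : ℝ} (hM : ∀ n, ‖z n‖ ≤ M) {δ : ℝ} (hδ : 0 ≤ δ)
    (hz : Pairwise fun i j => δ ≤ ‖z i - z j‖) {c : ℝ} (hc : c < δ ^ q.toReal) (N : ℕ) :
    ∃ A B : Finset ℕ, #A = N ∧ #B = N ∧ N * c ≤ ‖∑ i ∈ A, z i - ∑ i ∈ B, z i‖ ^ q.toReal := by
  obtain ⟨φ, hφ, hφz⟩ := exists_subseq_coord_tendsto hq hM
  have h_even : StrictMono fun k => φ (2 * k) := fun _ _ h => hφ (by omega)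
  have h_odd : StrictMono fun k => φ (2 * k + 1) := fun _ _ h => hφ (by omega)
  have h_null : ∀ i, Tendsto (fun k => (z (φ (2 * k)) - z (φ (2 * k + 1))) i) atTop (𝓝 0) := by
    intro i
    obtain ⟨x, hx⟩ := hφz i
    simpa using (hx.comp (strictMono_mul_left_of_pos two_pos).tendsto_atTop).sub
      (hx.comp ((strictMono_mul_left_of_pos two_pos).add_const 1).tendsto_atTop)
  obtain ⟨s, hs, h_norm⟩ := exists_card_eq_mul_le_norm_sum_rpow hq Nat.cofinite_eq_atTop.ge
    h_null hδ (fun k => hz (hφ.injective.ne (by omega))) hc N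
  refine ⟨s.map ⟨_, h_even.injective⟩, s.map ⟨_, h_odd.injective⟩, by simpa, by simpa, ?_⟩
  simpa [Finset.sum_map] using h_norm

end LpSum

theorem stmt_12_general (p : ℝ) [Fact (1 ≤ ENNReal.ofReal p)] (w : ℕ → ℝ) (hw_nonneg : 0 ≤ w)
    (hw_ne : w ≠ 0) (hw_null : Tendsto w atTop (𝓝 0)) {ι : Type*} (E : ι → Type*)
    [∀ i, NormedAddCommGroup (E i)] [∀ i, NormedSpace ℝ (E i)] [∀ i, FiniteDimensional ℝ (E i)] :
    ¬ ∃ (C : ℝ) (z : ℕ → lp E (ENNReal.ofReal p)), 0 < C ∧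
      ∀ a : ℕ → ℝ, a.support.Finite →
        C⁻¹ * lorentzNorm w p a ≤ ‖∑' i, a i • z i‖ ∧
        ‖∑' i, a i • z i‖ ≤ C * lorentzNorm w p a := by
  rintro ⟨C, z, hC, hz⟩
  have hp : 0 < p := zero_lt_one.trans_le (ENNReal.one_le_ofReal.mp Fact.out)
  have (i : ι) : ProperSpace (E i) := FiniteDimensional.proper_real (E i)
  have hw_bdd : BddAbove (Set.range w) := hw_null.bddAbove_range
  have h_lower := fun a ha => (hz a ha).1
  have h_upper := fun a ha => (hz a ha).2
  obtain ⟨M, hM⟩ := exists_forall_norm_le_of_le_lorentzNorm hp hw_nonneg hw_bdd hC.le h_upper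
  obtain ⟨m, hm⟩ := Function.ne_iff.mp hw_ne
  set δ := C⁻¹ * w m ^ (1 / p)
  have hδ : 0 < δ :=
    mul_pos (inv_pos.mpr hC) (Real.rpow_pos_of_pos ((hw_nonneg m).lt_of_ne' hm) _)
  have h_sep : Pairwise fun i j => δ ≤ ‖z i - z j‖ := fun i j =>
    mul_rpow_le_norm_sub_of_lorentzNorm_le hp hw_nonneg hw_bdd (inv_pos.mpr hC).le h_lower m
  obtain ⟨c, hc, hcδ⟩ := exists_between (Real.rpow_pos_of_pos hδ (ENNReal.ofReal p).toReal)
  obtain ⟨ε, hε, hεc⟩ := exists_between hc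
  obtain ⟨N, h_le, hN⟩ := ((eventually_norm_sum_sub_sum_rpow_le_of_le_lorentzNorm hp hw_nonneg
    hw_null hC h_upper hε).and (eventually_gt_atTop 0)).exists
  obtain ⟨A, B, hA, hB, h_ge⟩ :=
    exists_card_eq_mul_le_norm_sum_sub_sum_rpow ENNReal.ofReal_ne_top hM hδ.le h_sep hcδ N
  rw [ENNReal.toReal_ofReal hp.le] at h_ge
  have hcε : c ≤ ε := le_of_mul_le_mul_left (h_ge.trans (h_le A B hA hB)) (Nat.cast_pos.mpr hN)
  exact hcε.not_gt hεc

/-- Let `1 ≤ p < ∞` and `w ∈ 𝒲` (a positive, nonincreasing null weight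
with `w_1 = 1`, not summable; `0`-indexed below).  Let `(E_n)` be any sequence of
finite-dimensional real normed spaces and `E = (⊕_n E_n)_{ℓ_p}`.  Then there do not exist
`C ≥ 1` and a sequence `(z_i)` in `E` such that for every finitely supported real
sequence `(a_i)`:
`C⁻¹ ‖a‖_{d(w,p)} ≤ ‖∑_i a_i z_i‖_E ≤ C ‖a‖_{d(w,p)}`.
In particular, the Lorentz sequence space `d(w,p)` does not embed isomorphically into any
`ℓ_p`-sum of finite-dimensional spaces. -/
theorem stmt_12 (p : ℝ) (hp : 1 ≤ p) [Fact (1 ≤ ENNReal.ofReal p)]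
    (w : ℕ → ℝ) (hw_pos : ∀ i, 0 < w i) (hw_one : w 0 = 1) (hw_anti : Antitone w)
    (hw_null : Filter.Tendsto w Filter.atTop (nhds 0)) (hw_nonsum : ¬ Summable w)
    (E : ℕ → Type*) [∀ n, NormedAddCommGroup (E n)] [∀ n, NormedSpace ℝ (E n)]
    [∀ n, FiniteDimensional ℝ (E n)] :
    ¬ ∃ (C : ℝ) (z : ℕ → lp E (ENNReal.ofReal p)), 1 ≤ C ∧
      ∀ a : ℕ → ℝ, (Function.support a).Finite →
        C⁻¹ * lorentzNorm w p a ≤ ‖∑' i : ℕ, a i • z i‖ ∧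
        ‖∑' i : ℕ, a i • z i‖ ≤ C * lorentzNorm w p a := by
  rintro ⟨C, z, hC, hz⟩
  exact stmt_12_general p w (fun i => (hw_pos i).le) (fun h => (hw_pos 0).ne' (congrFun h 0))
    hw_null E ⟨C, z, zero_lt_one.trans_le hC, hz⟩
end
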